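/- In U, for every natural number k the power expansions p₁^k = Σ_{i=0}^{k} (−1)^i q^{2i² − ik − k² + i + k} [k;i] u₃^{k−i}u₂^{2i}u₁^{k−i} and p₀^k = Σ_{i=0}^{k} (−1)^i q^{2i² − ik − k² + i + k} [k;i] u₂^{k−i}u₁^{2i}u₀^{k−i} hold, where [k;i] denotes the quantum binomial coefficient. -/

import Mathlib

noncomputable section

abbrev F : Type := RatFunc ℚ

/-- The deformation parameter `q`. -/
def qq : F := RatFunc.X

/-- The quantum integer `[3] = q² + 1 + q⁻²`. -/
def box3 : F := qq ^ 2 + 1 + (qq⁻¹) ^ 2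

/-- The generators `E₁, E₂` of the free algebra. -/
def gen (i : Fin 2) : FreeAlgebra F (Fin 2) := FreeAlgebra.ι F i

/-- The quantized Serre relations. -/
inductive SerreRel : FreeAlgebra F (Fin 2) → FreeAlgebra F (Fin 2) → Prop
  | rel1 : SerreRel
      (gen 0 ^ 3 * gen 1 - box3 • (gen 0 ^ 2 * gen 1 * gen 0)
        + box3 • (gen 0 * gen 1 * gen 0 ^ 2) - gen 1 * gen 0 ^ 3) 0
  | rel2 : SerreRel
      (gen 1 ^ 3 * gen 0 - box3 • (gen 1 ^ 2 * gen 0 * gen 1)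
        + box3 • (gen 1 * gen 0 * gen 1 ^ 2) - gen 0 * gen 1 ^ 3) 0

/-- `U = U_q(𝔫)`, the free algebra on `E₁, E₂` modulo the quantized Serre relations. -/
abbrev U : Type := RingQuot SerreRel

def E1 : U := RingQuot.mkAlgHom F SerreRel (gen 0)
def E2 : U := RingQuot.mkAlgHom F SerreRel (gen 1)

/-- `A = (1/(q+q⁻¹))(E₂E₁ − q⁻²E₁E₂)`. -/
def Aelt : U := (qq + qq⁻¹)⁻¹ • (E2 * E1 - (qq⁻¹) ^ 2 • (E1 * E2))

def v0 : U := E1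
def v1 : U := Aelt * v0 - v0 * Aelt
def v2 : U := Aelt * v1 - v1 * Aelt
def v3 : U := Aelt * v2 - v2 * Aelt

/-- `uᵢ = (1 − q⁻²)⁻²ⁱ vᵢ`. -/
def u0 : U := v0
def u1 : U := ((1 - (qq⁻¹) ^ 2)⁻¹) ^ 2 • v1
def u2 : U := ((1 - (qq⁻¹) ^ 2)⁻¹) ^ 4 • v2
def u3 : U := ((1 - (qq⁻¹) ^ 2)⁻¹) ^ 6 • v3

/-- `p₁ = u₃u₁ − q²u₂²`. -/
def p1 : U := u3 * u1 - qq ^ 2 • u2 ^ 2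
/-- `p₀ = u₂u₀ − q²u₁²`. -/
def p0 : U := u2 * u0 - qq ^ 2 • u1 ^ 2

/-- The quantum integer `[m] = (q^m − q^{−m})/(q − q⁻¹)`. -/
def qint (m : ℤ) : F := (qq ^ m - qq ^ (-m)) / (qq - qq⁻¹)

/-- The quantized factorial `[i]! = [i][i−1]⋯[1]`. -/
def qfact (i : ℕ) : F := ∏ j ∈ Finset.range i, qint ((j : ℤ) + 1)

/-- The quantum binomial coefficient `[m; i] = [m][m−1]⋯[m−i+1]/[i]!`. -/
def qbinom (m : ℤ) (i : ℕ) : F := (∏ j ∈ Finset.range i, qint (m - j)) / qfact i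


section Helpers

lemma hp_aeval_ne (P : Polynomial ℚ) (h : P.eval 2 ≠ 0) : Polynomial.aeval qq P ≠ 0 := by
  have h0 : P ≠ 0 := by rintro rfl; simp at h
  have : Polynomial.aeval qq P = algebraMap (Polynomial ℚ) (RatFunc ℚ) P := by
    rw [qq, ← RatFunc.algebraMap_X, Polynomial.aeval_algebraMap_apply, Polynomial.aeval_X_left_apply]
  rw [this]
  exact RatFunc.algebraMap_ne_zero h0

lemma hp_q0 : qq ≠ 0 := by
  have := hp_aeval_ne Polynomial.X (by simp)
  simpa using this

lemma hp_pow_sub (n : ℕ) (hn : n ≠ 0) : qq ^ n - 1 ≠ 0 := by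
  have := hp_aeval_ne (Polynomial.X ^ n - 1) (by
    simp only [Polynomial.eval_sub, Polynomial.eval_pow, Polynomial.eval_X, Polynomial.eval_one]
    have : (1:ℚ) < 2 ^ n := one_lt_pow₀ (by norm_num) hn
    linarith)
  simpa using this

lemma hp_D : qq ^ 4 + qq ^ 2 + 1 ≠ 0 := by
  have := hp_aeval_ne (Polynomial.X ^ 4 + Polynomial.X ^ 2 + 1) (by norm_num)
  simpa using this

lemma hp_4 : qq ^ 4 + 1 ≠ 0 := by
  have := hp_aeval_ne (Polynomial.X ^ 4 + 1) (by norm_num)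
  simpa using this

lemma hp_2 : qq ^ 2 + 1 ≠ 0 := by
  have := hp_aeval_ne (Polynomial.X ^ 2 + 1) (by norm_num)
  simpa using this

lemma hp_sub_inv : qq - qq⁻¹ ≠ 0 := by
  have h := hp_pow_sub 2 (by norm_num)
  have h0 := hp_q0
  intro h1
  apply h
  have h2 : qq * qq⁻¹ = 1 := mul_inv_cancel₀ h0
  linear_combination qq * h1 + h2

lemma hp_qint_ne (j : ℕ) : qint ((j : ℤ) + 1) ≠ 0 := by
  have h0 := hp_q0
  have h := hp_pow_sub (2 * (j + 1)) (by omega)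
  unfold qint
  refine div_ne_zero ?_ hp_sub_inv
  intro h1
  apply h
  have e : qq ^ (2 * (j + 1)) = qq ^ ((j : ℤ) + 1) * qq ^ ((j : ℤ) + 1) := by
    rw [← zpow_add₀ h0, ← zpow_natCast]; congr 1; push_cast; ring
  rw [e]
  have e2 : qq ^ ((j : ℤ) + 1) * qq ^ (-((j : ℤ) + 1)) = 1 := by
    rw [← zpow_add₀ h0]; simp
  linear_combination qq ^ ((j : ℤ) + 1) * h1 + e2

lemma hp_qfact_ne (i : ℕ) : qfact i ≠ 0 :=
  Finset.prod_ne_zero_iff.mpr fun j _ => hp_qint_ne j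

lemma hp_qbinom_zero (m : ℤ) : qbinom m 0 = 1 := by simp [qbinom, qfact]

lemma hp_qint_zero : qint 0 = 0 := by simp [qint]

lemma hp_qbinom_top (k : ℕ) : qbinom (k : ℤ) (k + 1) = 0 := by
  unfold qbinom
  rw [Finset.prod_range_succ]
  simp [hp_qint_zero]

lemma hp_qint_add (k i : ℤ) :
    qint (k + 1) = qq ^ (-(i + 1)) * qint (k - i) + qq ^ (k - i) * qint (i + 1) := by
  have h0 := hp_q0
  unfold qint
  rw [← mul_div_assoc, ← mul_div_assoc, ← add_div]
  congr 1
  rw [mul_sub, mul_sub, ← zpow_add₀ h0, ← zpow_add₀ h0, ← zpow_add₀ h0, ← zpow_add₀ h0]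
  have e1 : -(i + 1) + (k - i) = k - i + -(i + 1) := by ring
  have e2 : -(i + 1) + -(k - i) = -(k + 1) := by ring
  have e3 : (k - i) + (i + 1) = k + 1 := by ring
  rw [e1, e2, e3]; ring

lemma hp_pascal (k i : ℕ) :
    qbinom ((k : ℤ) + 1) (i + 1) =
      qq ^ (-((i : ℤ) + 1)) * qbinom k (i + 1) + qq ^ ((k : ℤ) - i) * qbinom k i := by
  have hf := hp_qfact_ne i
  have hi := hp_qint_ne i
  have e : qfact (i + 1) = qfact i * qint ((i : ℤ) + 1) := by
    unfold qfact; rw [Finset.prod_range_succ]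
  unfold qbinom
  rw [e, Finset.prod_range_succ', Finset.prod_range_succ]
  have e2 : ∏ j ∈ Finset.range i, qint ((k : ℤ) + 1 - ((j + 1 : ℕ) : ℤ))
      = ∏ j ∈ Finset.range i, qint ((k : ℤ) - j) := by
    refine Finset.prod_congr rfl fun j _ => ?_
    congr 1; push_cast; ring
  rw [e2]
  have e3 := hp_qint_add k i
  simp only [Nat.cast_zero, sub_zero]
  rw [e3]
  field_simp

def hpc (k i : ℕ) : F := (-1 : F) ^ i *
            qq ^ (2 * (i : ℤ) ^ 2 - (i : ℤ) * (k : ℤ) - (k : ℤ) ^ 2 + (i : ℤ) + (k : ℤ)) *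
            qbinom (k : ℤ) i

lemma hpc_rec (k i : ℕ) : hpc (k + 1) (i + 1) =
    qq ^ (-2 * (k : ℤ) - 2 * (i + 1)) * hpc k (i + 1) - qq ^ (-2 * (k : ℤ) + 2 * (i + 1)) * hpc k i := by
  have h0 := hp_q0
  unfold hpc
  have := hp_pascal k i
  push_cast
  rw [this]
  have E1 : qq ^ (2 * ((i : ℤ) + 1) ^ 2 - ((i : ℤ) + 1) * ((k : ℤ) + 1) - ((k : ℤ) + 1) ^ 2 + ((i : ℤ) + 1) + ((k : ℤ) + 1))
      * qq ^ (-((i : ℤ) + 1)) = qq ^ (-2 * (k : ℤ) - 2 * ((i : ℤ) + 1)) *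
      qq ^ (2 * ((i : ℤ) + 1) ^ 2 - ((i : ℤ) + 1) * (k : ℤ) - (k : ℤ) ^ 2 + ((i : ℤ) + 1) + (k : ℤ)) := by
    rw [← zpow_add₀ h0, ← zpow_add₀ h0]; congr 1; ring
  have E2 : qq ^ (2 * ((i : ℤ) + 1) ^ 2 - ((i : ℤ) + 1) * ((k : ℤ) + 1) - ((k : ℤ) + 1) ^ 2 + ((i : ℤ) + 1) + ((k : ℤ) + 1))
      * qq ^ ((k : ℤ) - i) = qq ^ (-2 * (k : ℤ) + 2 * ((i : ℤ) + 1)) *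
      qq ^ (2 * (i : ℤ) ^ 2 - (i : ℤ) * (k : ℤ) - (k : ℤ) ^ 2 + (i : ℤ) + (k : ℤ)) := by
    rw [← zpow_add₀ h0, ← zpow_add₀ h0]; congr 1; ring
  rw [pow_succ]
  linear_combination (-1) ^ i * (-1) * qbinom (k : ℤ) (i + 1) * E1 - (-1) ^ i * qbinom (k : ℤ) i * E2

lemma hpc_rec0 (k : ℕ) : hpc (k + 1) 0 = qq ^ (-2 * (k : ℤ)) * hpc k 0 := by
  have h0 := hp_q0
  unfold hpc
  rw [hp_qbinom_zero, hp_qbinom_zero]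
  simp only [pow_zero, one_mul, mul_one]
  rw [← zpow_add₀ h0]
  congr 1; push_cast; ring

lemma hpc_top (k : ℕ) : hpc k (k + 1) = 0 := by
  unfold hpc; rw [hp_qbinom_top]; simp

lemma hp_gen {K S : Type*} [Field K] [Ring S] [Algebra K S] (q : K) (h0 : q ≠ 0) (x y z : S)
    (hyz : y * z = q ^ 2 • (z * y)) (hxy : x * y = q ^ 2 • (y * x))
    (hxz : x * z - q ^ 2 • (z * x) = (q ^ 2 - 1) • y ^ 2) :
    z * y = (q⁻¹) ^ 2 • (y * z) ∧
    (x * z - q ^ 2 • y ^ 2) * x = (q⁻¹) ^ 2 • (x * (x * z - q ^ 2 • y ^ 2)) := by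
  have hzy : z * y = (q⁻¹) ^ 2 • (y * z) := by
    rw [hyz, smul_smul, ← mul_pow, inv_mul_cancel₀ h0]; simp
  have hyx : y * x = (q⁻¹) ^ 2 • (x * y) := by
    rw [hxy, smul_smul, ← mul_pow, inv_mul_cancel₀ h0]; simp
  have hzx : z * x = (q⁻¹) ^ 2 • (x * z) - (1 - (q⁻¹) ^ 2) • (y * y) := by
    have : q ^ 2 • (z * x) = x * z - (q ^ 2 - 1) • y ^ 2 := by rw [← hxz]; abel
    have h2 : z * x = (q⁻¹) ^ 2 • (q ^ 2 • (z * x)) := by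
      rw [smul_smul, ← mul_pow, inv_mul_cancel₀ h0]; simp
    rw [h2, this, pow_two y]
    match_scalars <;> field_simp
  have hpx : (x * z - q ^ 2 • y ^ 2) * x = (q⁻¹) ^ 2 • (x * (x * z - q ^ 2 • y ^ 2)) := by
    have h3 : y * (y * x) = (q⁻¹) ^ 4 • (x * (y * y)) := by
      rw [hyx, mul_smul_comm, ← mul_assoc, hyx, smul_mul_assoc, smul_smul, mul_assoc, ← pow_add]
    rw [sub_mul, smul_mul_assoc, pow_two y, mul_assoc, mul_assoc, hzx, h3]
    simp only [mul_sub, mul_smul_comm]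
    match_scalars <;> field_simp
    ring
  exact ⟨hzy, hpx⟩

variable {R : Type*} [Ring R] [Algebra F R]

lemma hp_comm_pow {a b : R} {s : F} (h : a * b = s • (b * a)) (n : ℕ) :
    a * b ^ n = s ^ n • (b ^ n * a) := by
  induction n with
  | zero => simp
  | succ n ih =>
    rw [pow_succ, ← mul_assoc, ih, smul_mul_assoc, mul_assoc, h, mul_smul_comm, smul_smul,
      ← mul_assoc, pow_succ]

lemma hp_power (x y z : R) (hyz : y * z = qq ^ 2 • (z * y)) (hxy : x * y = qq ^ 2 • (y * x))
    (hxz : x * z - qq ^ 2 • (z * x) = (qq ^ 2 - 1) • y ^ 2) (k : ℕ) :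
    (x * z - qq ^ 2 • y ^ 2) ^ k =
      ∑ i ∈ Finset.range (k + 1), hpc k i • (x ^ (k - i) * y ^ (2 * i) * z ^ (k - i)) := by
  have h0 := hp_q0
  obtain ⟨hzy, hpx⟩ := hp_gen qq h0 x y z hyz hxy hxz
  induction k with
  | zero => simp [hpc, hp_qbinom_zero]
  | succ k ih =>
    have step : ∀ i ∈ Finset.range (k + 1),
        (x * z - qq ^ 2 • y ^ 2) * (hpc k i • (x ^ (k - i) * y ^ (2 * i) * z ^ (k - i)))
        = (qq ^ (-2 * (k : ℤ) - 2 * i) * hpc k i) • (x ^ (k + 1 - i) * y ^ (2 * i) * z ^ (k + 1 - i))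
        - (qq ^ (-2 * (k : ℤ) + 2 * (i + 1)) * hpc k i) •
          (x ^ (k - i) * y ^ (2 * (i + 1)) * z ^ (k - i)) := by
      intro i hi
      obtain ⟨m, rfl⟩ : ∃ m, k = i + m := ⟨k - i, by have := Finset.mem_range.mp hi; omega⟩
      have e1 : i + m - i = m := by omega
      have e2 : i + m + 1 - i = m + 1 := by omega
      rw [e1, e2]
      have h4 := hp_comm_pow hpx m
      have h5 := hp_comm_pow hzy (2 * i)
      have h6 : (x * z - qq ^ 2 • y ^ 2) * (x ^ m * y ^ (2 * i) * z ^ m)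
          = ((qq⁻¹) ^ 2) ^ m • (((qq⁻¹) ^ 2) ^ (2 * i) • (x ^ (m + 1) * y ^ (2 * i) * z ^ (m + 1))
            - qq ^ 2 • (x ^ m * y ^ (2 * (i + 1)) * z ^ m)) := by
        rw [← mul_assoc, ← mul_assoc, h4, smul_mul_assoc, smul_mul_assoc]
        congr 1
        rw [mul_sub, sub_mul, sub_mul]
        congr 1
        · rw [show x ^ m * (x * z) * y ^ (2 * i) * z ^ m = x ^ m * x * (z * y ^ (2 * i)) * z ^ m by
            simp only [mul_assoc], h5, mul_smul_comm, smul_mul_assoc, pow_succ x, pow_succ' z]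
          simp only [mul_assoc]
        · rw [mul_smul_comm, smul_mul_assoc, smul_mul_assoc, mul_assoc (x ^ m), ← pow_add]
          rw [show 2 + 2 * i = 2 * (i + 1) by ring]
      rw [mul_smul_comm, h6, smul_sub, smul_sub, smul_smul, smul_smul, smul_smul, smul_smul]
      have z1 : ((qq⁻¹) ^ 2) ^ m = qq ^ (-2 * (m : ℤ)) := by
        rw [← pow_mul, inv_pow, ← zpow_natCast, ← zpow_neg]; congr 1
      have z2 : ((qq⁻¹) ^ 2) ^ (2 * i) = qq ^ (-4 * (i : ℤ)) := by
        rw [← pow_mul, inv_pow, ← zpow_natCast, ← zpow_neg]; congr 1; push_cast; ring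
      have z3 : qq ^ 2 = qq ^ (2 : ℤ) := by norm_cast
      rw [z1, z2, z3]
      congr 2
      · rw [mul_assoc, ← zpow_add₀ h0, mul_comm]
        congr 2; push_cast; ring
      · rw [mul_assoc, ← zpow_add₀ h0, mul_comm]
        congr 2; push_cast; ring
    rw [pow_succ', ih, Finset.mul_sum, Finset.sum_congr rfl step, Finset.sum_sub_distrib]
    rw [Finset.sum_range_succ' _ (k + 1)]
    simp only [hpc_rec, hpc_rec0, sub_smul, Finset.sum_sub_distrib, Nat.add_sub_add_right]
    rw [Finset.sum_range_succ' _ k]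
    rw [Finset.sum_range_succ (fun i => (qq ^ (-2 * (k : ℤ) - 2 * ((i : ℤ) + 1)) * hpc k (i + 1)) • _) k]
    rw [hpc_top]
    simp only [Nat.add_sub_add_right, Nat.cast_add, Nat.cast_one, Nat.cast_zero, mul_zero, zero_smul,
      sub_zero, add_zero]
    abel

lemma hp_half {x : R} (h : x = -x) : x = 0 := by
  have h2 : (2 : F) • x = 0 := by
    rw [two_smul]; nth_rewrite 1 [h]; simp
  have h3 : (2 : F) ≠ 0 := two_ne_zero
  exact (smul_eq_zero_iff_right h3).mp h2

/-- quadratic current relations -/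
def hpR (u : ℕ → R) (m n : ℕ) : R :=
  u (m + 1) * u n - qq ^ 2 • (u n * u (m + 1)) + u (n + 1) * u m - qq ^ 2 • (u m * u (n + 1))

lemma hpR_der (u : ℕ → R) (A : R) (d : ℕ) (hA : ∀ i, A * u i = u i * A + u (i + d)) (m n : ℕ) :
    A * hpR u m n - hpR u m n * A = hpR u (m + d) n + hpR u m (n + d) := by
  have h : ∀ i j, A * (u i * u j) = u i * u j * A + u (i + d) * u j + u i * u (j + d) := by
    intro i j
    rw [← mul_assoc, hA, add_mul, mul_assoc, hA, mul_add, ← mul_assoc]; abel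
  unfold hpR
  simp only [mul_sub, mul_add, sub_mul, add_mul, mul_smul_comm, smul_mul_assoc, h, smul_add]
  rw [show m + 1 + d = m + d + 1 by omega, show n + 1 + d = n + d + 1 by omega]
  abel

lemma hpR_symm (u : ℕ → R) (m n : ℕ) : hpR u m n = hpR u n m := by
  unfold hpR; abel

lemma hp_two {x : R} (h : x + x = 0) : x = 0 := hp_half (eq_neg_of_add_eq_zero_left h)

lemma hpR_all (u : ℕ → R) (A C : R) (hA : ∀ i, A * u i = u i * A + u (i + 1))
    (hC : ∀ i, C * u i = u i * C + u (i + 2)) (m : ℕ) (h : hpR u m m = 0) :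
    hpR u (m + 1) m = 0 ∧ hpR u (m + 1) (m + 1) = 0 := by
  have h1 := hpR_der u A 1 hA m m
  rw [h, hpR_symm u m (m + 1)] at h1
  have h1' : hpR u (m + 1) m = 0 := hp_two (by rw [← h1]; simp)
  have h2 := hpR_der u C 2 hC m m
  rw [h, hpR_symm u m (m + 2)] at h2
  have h2' : hpR u (m + 2) m = 0 := hp_two (by rw [← h2]; simp)
  have h3 := hpR_der u A 1 hA (m + 1) m
  rw [h1', h2'] at h3
  refine ⟨h1', ?_⟩
  simpa using h3.symm

lemma hp_diag (u : ℕ → R) (m : ℕ) (h : hpR u m m = 0) :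
    u (m + 1) * u m = qq ^ 2 • (u m * u (m + 1)) := by
  rw [← sub_eq_zero]
  apply hp_two
  rw [← h, hpR]; abel

lemma hp_off (u : ℕ → R) (m : ℕ) (h : hpR u (m + 1) m = 0) :
    u (m + 2) * u m - qq ^ 2 • (u m * u (m + 2)) = (qq ^ 2 - 1) • u (m + 1) ^ 2 := by
  rw [← sub_eq_zero, ← h, hpR, sub_smul, one_smul, pow_two (u (m + 1)), show m + 1 + 1 = m + 2 from rfl]
  abel

lemma hp_serre {K S : Type*} [Field K] [CharZero K] [Ring S] [Algebra K S] (q : K) (h0 : q ≠ 0)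
    (hD : q ^ 4 + q ^ 2 + 1 ≠ 0) (X Y : S)
    (r1 : X ^ 3 * Y - (q ^ 2 + 1 + (q⁻¹) ^ 2) • (X ^ 2 * Y * X)
        + (q ^ 2 + 1 + (q⁻¹) ^ 2) • (X * Y * X ^ 2) - Y * X ^ 3 = 0)
    (r2 : Y ^ 3 * X - (q ^ 2 + 1 + (q⁻¹) ^ 2) • (Y ^ 2 * X * Y)
        + (q ^ 2 + 1 + (q⁻¹) ^ 2) • (Y * X * Y ^ 2) - X * Y ^ 3 = 0)
    (B w C : S) (hB : B = Y * X - (q⁻¹) ^ 2 • (X * Y)) (hw : w = B * X - X * B)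
    (hC : C = Y * w - (q⁻¹) ^ 2 • (w * Y) - ((q ^ 4 - 1) / (2 * q ^ 2)) • (B * B)) :
    w * X = q ^ 2 • (X * w) ∧ C * X - X * C = ((q ^ 4 + 1) / (2 * q ^ 2)) • (B * w - w * B) ∧
    C * B = B * C := by
  refine ⟨?_, ?_, ?_⟩
  · rw [← sub_eq_zero, ← smul_zero (-1 : K), ← r1, hw, hB]
    simp only [mul_sub, sub_mul, mul_add, add_mul, mul_smul_comm, smul_mul_assoc, smul_sub,
      smul_add, smul_smul, mul_assoc, pow_succ X, pow_succ Y, pow_zero, one_mul]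
    match_scalars <;> field_simp <;> ring
  · rw [← sub_eq_zero]
    have e : (q ^ 4)⁻¹ • ((X ^ 3 * Y - (q ^ 2 + 1 + (q⁻¹) ^ 2) • (X ^ 2 * Y * X)
        + (q ^ 2 + 1 + (q⁻¹) ^ 2) • (X * Y * X ^ 2) - Y * X ^ 3) * Y)
        - Y * (X ^ 3 * Y - (q ^ 2 + 1 + (q⁻¹) ^ 2) • (X ^ 2 * Y * X)
        + (q ^ 2 + 1 + (q⁻¹) ^ 2) • (X * Y * X ^ 2) - Y * X ^ 3) = 0 := by rw [r1]; simp
    rw [← e, hC, hw, hB]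
    simp only [mul_sub, sub_mul, mul_add, add_mul, mul_smul_comm, smul_mul_assoc, smul_sub,
      smul_add, smul_smul, mul_assoc, pow_succ X, pow_succ Y, pow_zero, one_mul]
    match_scalars <;> field_simp <;> ring
  · rw [← sub_eq_zero]
    suffices hs : (q ^ 4 + q ^ 2 + 1) • (C * B - B * C) = 0 by
      have := congrArg (fun t => (q ^ 4 + q ^ 2 + 1)⁻¹ • t) hs
      simpa only [smul_smul, inv_mul_cancel₀ hD, one_smul, smul_zero] using this
    obtain ⟨P, hP⟩ : ∃ P, P = X ^ 3 * Y - (q ^ 2 + 1 + (q⁻¹) ^ 2) • (X ^ 2 * Y * X)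
        + (q ^ 2 + 1 + (q⁻¹) ^ 2) • (X * Y * X ^ 2) - Y * X ^ 3 := ⟨_, rfl⟩
    obtain ⟨Q, hQ⟩ : ∃ P, P = Y ^ 3 * X - (q ^ 2 + 1 + (q⁻¹) ^ 2) • (Y ^ 2 * X * Y)
        + (q ^ 2 + 1 + (q⁻¹) ^ 2) • (Y * X * Y ^ 2) - X * Y ^ 3 := ⟨_, rfl⟩
    have e : (-1 / q ^ 4) • (P * Y * Y + X * X * Q)
        + ((q ^ 2 + 1) / q ^ 2) • (Y * P * Y + X * Q * X)
        + (- q ^ 2) • (Y * Y * P + Q * X * X) = 0 := by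
      rw [hP, hQ, r1, r2]; simp
    rw [← e, hC, hw, hB, hP, hQ]
    simp only [mul_sub, sub_mul, mul_add, add_mul, mul_smul_comm, smul_mul_assoc, smul_sub,
      smul_add, smul_smul, mul_assoc, pow_succ X, pow_succ Y, pow_zero, one_mul]
    match_scalars <;> field_simp <;> ring

/-- iterated commutators -/
def hpu (A x : R) : ℕ → R
  | 0 => x
  | n + 1 => A * hpu A x n - hpu A x n * A

lemma hpu_C (A C x : R) (hAC : C * A = A * C) (h : C * x - x * C = hpu A x 2) (n : ℕ) :
    C * hpu A x n = hpu A x n * C + hpu A x (n + 2) := by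
  induction n with
  | zero => rw [show hpu A x 0 = x from rfl, zero_add, ← h]; abel
  | succ n ih =>
    rw [show hpu A x (n + 1) = A * hpu A x n - hpu A x n * A from rfl,
      show hpu A x (n + 1 + 2) = A * hpu A x (n + 2) - hpu A x (n + 2) * A from rfl]
    have i1 : C * (A * hpu A x n) = A * (hpu A x n * C) + A * hpu A x (n + 2) := by
      rw [← mul_assoc, hAC, mul_assoc, ih, mul_add]
    have i2 : C * (hpu A x n * A) = hpu A x n * A * C + hpu A x (n + 2) * A := by
      rw [← mul_assoc, ih, add_mul, mul_assoc, hAC, ← mul_assoc]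
    rw [mul_sub, i1, i2, sub_mul, mul_assoc A]; abel

lemma hp_main (l : F) (X Y A : R)
    (r1 : X ^ 3 * Y - (qq ^ 2 + 1 + (qq⁻¹) ^ 2) • (X ^ 2 * Y * X)
        + (qq ^ 2 + 1 + (qq⁻¹) ^ 2) • (X * Y * X ^ 2) - Y * X ^ 3 = 0)
    (r2 : Y ^ 3 * X - (qq ^ 2 + 1 + (qq⁻¹) ^ 2) • (Y ^ 2 * X * Y)
        + (qq ^ 2 + 1 + (qq⁻¹) ^ 2) • (Y * X * Y ^ 2) - X * Y ^ 3 = 0)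
    (hA : A = l • (Y * X - (qq⁻¹) ^ 2 • (X * Y))) :
    hpR (hpu A X) 0 0 = 0 ∧ hpR (hpu A X) 1 0 = 0 ∧ hpR (hpu A X) 1 1 = 0
      ∧ hpR (hpu A X) 2 1 = 0 ∧ hpR (hpu A X) 2 2 = 0 := by
  have h0 := hp_q0
  obtain ⟨B, hB⟩ : ∃ B, B = Y * X - (qq⁻¹) ^ 2 • (X * Y) := ⟨_, rfl⟩
  obtain ⟨w, hw⟩ : ∃ w, w = B * X - X * B := ⟨_, rfl⟩
  obtain ⟨C, hC⟩ : ∃ C, C = Y * w - (qq⁻¹) ^ 2 • (w * Y) - ((qq ^ 4 - 1) / (2 * qq ^ 2)) • (B * B) :=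
    ⟨_, rfl⟩
  obtain ⟨s1, s2, s3⟩ := hp_serre qq h0 hp_D X Y r1 r2 B w C hB hw hC
  rw [← hB] at hA
  have u1 : hpu A X 1 = l • w := by
    change A * X - X * A = _
    rw [hA, hw, smul_mul_assoc, mul_smul_comm, smul_sub]
  have u2 : hpu A X 2 = (l * l) • (B * w - w * B) := by
    change A * hpu A X 1 - hpu A X 1 * A = _
    rw [u1, hA]
    simp only [smul_mul_assoc, mul_smul_comm, smul_sub, smul_smul]
  have hd : ((qq ^ 4 + 1) / (2 * qq ^ 2)) ≠ 0 :=
    div_ne_zero hp_4 (mul_ne_zero two_ne_zero (pow_ne_zero _ h0))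
  have hC2 : ((l * l) / ((qq ^ 4 + 1) / (2 * qq ^ 2))) • C * X
      - X * ((l * l) / ((qq ^ 4 + 1) / (2 * qq ^ 2))) • C = hpu A X 2 := by
    rw [u2, smul_mul_assoc, mul_smul_comm, ← smul_sub, s2, smul_smul, div_mul_cancel₀ _ hd]
  have hCA : ((l * l) / ((qq ^ 4 + 1) / (2 * qq ^ 2))) • C * A
      = A * ((l * l) / ((qq ^ 4 + 1) / (2 * qq ^ 2))) • C := by
    rw [hA]
    simp only [smul_mul_assoc, mul_smul_comm]
    rw [s3, smul_comm]
  have dC := hpu_C A _ X hCA hC2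
  have dA : ∀ i, A * hpu A X i = hpu A X i * A + hpu A X (i + 1) := by
    intro i
    rw [show hpu A X (i + 1) = A * hpu A X i - hpu A X i * A from rfl]; abel
  have R00 : hpR (hpu A X) 0 0 = 0 := by
    unfold hpR
    rw [zero_add, u1, show hpu A X 0 = X from rfl, smul_mul_assoc, mul_smul_comm, s1, smul_comm]
    abel
  obtain ⟨R10, R11⟩ := hpR_all _ A _ dA dC 0 R00
  obtain ⟨R21, R22⟩ := hpR_all _ A _ dA dC 1 R11
  exact ⟨R00, R10, R11, R21, R22⟩

lemma hp_r1 : E1 ^ 3 * E2 - (qq ^ 2 + 1 + (qq⁻¹) ^ 2) • (E1 ^ 2 * E2 * E1)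
        + (qq ^ 2 + 1 + (qq⁻¹) ^ 2) • (E1 * E2 * E1 ^ 2) - E2 * E1 ^ 3 = 0 := by
  have := RingQuot.mkAlgHom_rel F SerreRel.rel1
  simp only [map_sub, map_add, map_mul, map_pow, map_smul, map_zero] at this
  rw [← E1, ← E2, box3] at this
  exact this

lemma hp_r2 : E2 ^ 3 * E1 - (qq ^ 2 + 1 + (qq⁻¹) ^ 2) • (E2 ^ 2 * E1 * E2)
        + (qq ^ 2 + 1 + (qq⁻¹) ^ 2) • (E2 * E1 * E2 ^ 2) - E1 * E2 ^ 3 = 0 := by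
  have := RingQuot.mkAlgHom_rel F SerreRel.rel2
  simp only [map_sub, map_add, map_mul, map_pow, map_smul, map_zero] at this
  rw [← E1, ← E2, box3] at this
  exact this

lemma hp_scale (a : F) (A x : R) (n : ℕ) : hpu (a • A) x n = a ^ n • hpu A x n := by
  induction n with
  | zero => simp [hpu]
  | succ n ih =>
    simp only [hpu]
    rw [ih]
    simp only [smul_mul_assoc, mul_smul_comm, smul_sub, smul_smul, pow_succ]
    rw [mul_comm a]

end Helpers

/-- In `U`, for every natural number `k` the power expansions
`p₁^k = Σ_{i=0}^{k} (−1)^i q^{2i² − ik − k² + i + k} [k;i] u₃^{k−i}u₂^{2i}u₁^{k−i}` and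
`p₀^k = Σ_{i=0}^{k} (−1)^i q^{2i² − ik − k² + i + k} [k;i] u₂^{k−i}u₁^{2i}u₀^{k−i}` hold. -/
theorem stmt7 (k : ℕ) :
    p1 ^ k = ∑ i ∈ Finset.range (k + 1),
        ((-1 : F) ^ i *
            qq ^ (2 * (i : ℤ) ^ 2 - (i : ℤ) * (k : ℤ) - (k : ℤ) ^ 2 + (i : ℤ) + (k : ℤ)) *
            qbinom (k : ℤ) i) •
          (u3 ^ (k - i) * u2 ^ (2 * i) * u1 ^ (k - i)) ∧
    p0 ^ k = ∑ i ∈ Finset.range (k + 1),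
        ((-1 : F) ^ i *
            qq ^ (2 * (i : ℤ) ^ 2 - (i : ℤ) * (k : ℤ) - (k : ℤ) ^ 2 + (i : ℤ) + (k : ℤ)) *
            qbinom (k : ℤ) i) •
          (u2 ^ (k - i) * u1 ^ (2 * i) * u0 ^ (k - i)) := by
  have hu : ∀ n, hpu (((1 - (qq⁻¹) ^ 2)⁻¹) ^ 2 • Aelt) E1 n
      = ((1 - (qq⁻¹) ^ 2)⁻¹) ^ (2 * n) • hpu Aelt E1 n := by
    intro n; rw [hp_scale, ← pow_mul]
  obtain ⟨R00, R10, R11, R21, R22⟩ := hp_main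
    (((1 - (qq⁻¹) ^ 2)⁻¹) ^ 2 * (qq + qq⁻¹)⁻¹) E1 E2 (((1 - (qq⁻¹) ^ 2)⁻¹) ^ 2 • Aelt) hp_r1 hp_r2
    (by rw [Aelt, smul_smul])
  have e0 : hpu (((1 - (qq⁻¹) ^ 2)⁻¹) ^ 2 • Aelt) E1 0 = u0 := rfl
  have e1 : hpu (((1 - (qq⁻¹) ^ 2)⁻¹) ^ 2 • Aelt) E1 1 = u1 := hu 1
  have e2 : hpu (((1 - (qq⁻¹) ^ 2)⁻¹) ^ 2 • Aelt) E1 2 = u2 := hu 2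
  have e3 : hpu (((1 - (qq⁻¹) ^ 2)⁻¹) ^ 2 • Aelt) E1 3 = u3 := hu 3
  have d0 := hp_diag _ 0 R00
  have d1 := hp_diag _ 1 R11
  have d2 := hp_diag _ 2 R22
  have f0 := hp_off _ 0 R10
  have f1 := hp_off _ 1 R21
  simp only [zero_add, Nat.reduceAdd, e0, e1, e2, e3] at d0 d1 d2 f0 f1
  exact ⟨hp_power u3 u2 u1 d1 d2 f1 k, hp_power u2 u1 u0 d0 d1 f0 k⟩
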